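/- Let α > −1/2 and m be real numbers with m > α + 1/2, and let A, B > 0 be fixed. Then there exists a constant C = C(α, m, A, B) > 0 such that for all d ∈ (0, min(A,B)]: ∫₀^A ( ∫_d^B s^α·(s+r)^{−(m+1)} ds )² dr ≤ C · d^{2(α−m)+1}. -/

import Mathlib

open Complex MeasureTheory Set Filter Metric

noncomputable section

/-- A bounded Jordan domain `G ⊆ ℂ` whose boundary is a rectifiable Jordan curve
of length `l`, given together with a unit-speed (arclength) parametrization `γ`
of the boundary curve `L = frontier G`. -/
structure JordanDomain where
  /-- the domain -/
  G : Set ℂ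
  isOpen : IsOpen G
  nonempty : G.Nonempty
  bounded : Bornology.IsBounded G
  connected : IsConnected G
  simplyConnected : SimplyConnectedSpace ↥G
  /-- the length of the boundary curve -/
  l : ℝ
  l_pos : 0 < l
  /-- arclength parametrization of the boundary curve -/
  γ : ℝ → ℂ
  γ_cont : Continuous γ
  γ_periodic : Function.Periodic γ l
  γ_injOn : InjOn γ (Ico 0 l)
  γ_boundary : γ '' Ico 0 l = frontier G
  /-- `γ` is a unit-speed (arclength) parametrization; in particular the boundary
  is rectifiable with length `l`. -/
  γ_unitSpeed : ∀ s t : ℝ, s ≤ t → t ≤ s + l →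
    eVariationOn γ (Icc s t) = ENNReal.ofReal (t - s)

/-- The `E₂(G)`-norm of (the boundary trace of) a function, computed through the
arclength parametrization of the boundary: `‖g‖₂ = ((1/l) ∫₀^l ‖g(s)‖² ds)^{1/2}`. -/
def JordanDomain.bnorm (D : JordanDomain) (g : ℝ → ℂ) : ℝ :=
  Real.sqrt ((1 / D.l) * ∫ s in (0:ℝ)..D.l, ‖g s‖ ^ 2)

/-- `p` is the sequence of orthonormal polynomials of `E₂(G)` obtained by Gram–Schmidt
orthonormalization of the monomials `1, z, z², …`: `deg p k = k`, the leading
coefficients are positive reals, and the polynomials are orthonormal with respect to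
the arclength inner product `(f,g) = (1/l) ∫_L f conj(g) |dz|`. -/
def JordanDomain.IsONPolys (D : JordanDomain) (p : ℕ → Polynomial ℂ) : Prop :=
  (∀ k, (p k).natDegree = k) ∧
  (∀ k, ∃ c : ℝ, 0 < c ∧ (p k).leadingCoeff = (c : ℂ)) ∧
  (∀ j k, (1 / (D.l : ℂ)) * (∫ s in (0:ℝ)..D.l,
      (p j).eval (D.γ s) * (starRingEnd ℂ) ((p k).eval (D.γ s))) =
    if j = k then 1 else 0)

/-- The `n`-th partial sum `Σ_{k=0}^n conj(p_k(ζ))·p_k(z)` of the Szegő kernel expansion. -/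
def partialSum (p : ℕ → Polynomial ℂ) (ζ : ℂ) (n : ℕ) : ℂ → ℂ := fun z =>
  ∑ k ∈ Finset.range (n + 1), (starRingEnd ℂ) ((p k).eval ζ) * (p k).eval z

/-- The Szegő kernel `K(z,ζ) = Σ_{k=0}^∞ conj(p_k(ζ))·p_k(z)`. -/
def szegoKernel (p : ℕ → Polynomial ℂ) (ζ z : ℂ) : ℂ :=
  ∑' k : ℕ, (starRingEnd ℂ) ((p k).eval ζ) * (p k).eval z

/-- The approximating polynomials
`J_{2n+1}(z) = (2π/l)·(∫_ζ^z (Σ_{k=0}^n conj(p_k(ζ))p_k(t))² dt) / (Σ_{k=0}^n |p_k(ζ)|²)`;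
the (path-independent) integral of the polynomial integrand is written out explicitly,
using `∫_ζ^z t^i dt = (z^{i+1} - ζ^{i+1})/(i+1)`. -/
def Jfun (D : JordanDomain) (p : ℕ → Polynomial ℂ) (ζ : ℂ) (n : ℕ) : ℂ → ℂ := fun z =>
  let S : Polynomial ℂ :=
    (∑ k ∈ Finset.range (n + 1), Polynomial.C ((starRingEnd ℂ) ((p k).eval ζ)) * p k) ^ 2
  (((2 * Real.pi / D.l : ℝ) : ℂ) / (∑ k ∈ Finset.range (n + 1), ((‖(p k).eval ζ‖ : ℂ)) ^ 2)) *
    ∑ i ∈ Finset.range (S.natDegree + 1),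
      S.coeff i * ((z ^ (i + 1) - ζ ^ (i + 1)) / ((i : ℂ) + 1))

/-- `Q_n(z) = ((l/2π)·Σ_{k=0}^n |p_k(ζ)|²)^{-1/2} · Σ_{k=0}^n conj(p_k(ζ))·p_k(z)`,
so that `J'_{2n+1} = Q_n²`. -/
def Qfun (D : JordanDomain) (p : ℕ → Polynomial ℂ) (ζ : ℂ) (n : ℕ) : ℂ → ℂ := fun z =>
  ((Real.sqrt ((D.l / (2 * Real.pi)) *
      ∑ k ∈ Finset.range (n + 1), ‖(p k).eval ζ‖ ^ 2) : ℝ) : ℂ)⁻¹ * partialSum p ζ n z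

/-- The sup norm `⨆_{z ∈ K} ‖f(z)‖` on a set `K ⊆ ℂ`. -/
def supNormOn (K : Set ℂ) (f : ℂ → ℂ) : ℝ := ⨆ z : K, ‖f (z : ℂ)‖

/-- `g` has nontangential limit `v` at the boundary point `w` of `G`:
`g(z) → v` as `z → w` inside every cone `{z ∈ G : ‖z - w‖ ≤ M·dist(z, ∂G)}`. -/
def NTLim (G : Set ℂ) (g : ℂ → ℂ) (w v : ℂ) : Prop :=
  ∀ M : ℝ, 1 < M →
    Tendsto g (nhdsWithin w {z | z ∈ G ∧ ‖z - w‖ ≤ M * infDist z (frontier G)}) (nhds v)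

/-- `φ` is the conformal map of `G` onto the unit disk `D` normalized by
`φ(ζ) = 0` and `φ'(ζ) > 0`. -/
structure ConformalOnto (G : Set ℂ) (φ : ℂ → ℂ) (ζ : ℂ) : Prop where
  differentiable : ∀ z ∈ G, DifferentiableAt ℂ φ z
  bijOn : BijOn φ G (ball (0 : ℂ) 1)
  map_center : φ ζ = 0
  deriv_center_pos : ∃ c : ℝ, 0 < c ∧ deriv φ ζ = (c : ℂ)

/-- `G` is a Smirnov domain: for any conformal map `ψ` of the unit disk onto `G`,
`log|ψ'|` is represented by the Poisson integral of its (radial) boundary values.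
(By the Keldysh–Lavrentiev theorem this is equivalent to polynomials being dense
in the Smirnov classes `E_p(G)`.) -/
def IsSmirnovDomain (G : Set ℂ) : Prop :=
  ∀ ψ : ℂ → ℂ,
    (∀ w ∈ ball (0 : ℂ) 1, DifferentiableAt ℂ ψ w) →
    BijOn ψ (ball (0 : ℂ) 1) G →
    ∃ h : ℝ → ℝ,
      IntervalIntegrable h volume 0 (2 * Real.pi) ∧
      (∀ᵐ (θ : ℝ) ∂(volume.restrict (Ioc (0 : ℝ) (2 * Real.pi))),
        Tendsto (fun r : ℝ => Real.log ‖deriv ψ ((r : ℂ) * Complex.exp ((θ : ℂ) * Complex.I))‖)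
          (nhdsWithin 1 (Iio 1)) (nhds (h θ))) ∧
      (∀ w ∈ ball (0 : ℂ) 1,
        Real.log ‖deriv ψ w‖ =
          (1 / (2 * Real.pi)) * ∫ θ in (0 : ℝ)..(2 * Real.pi),
            ((1 - ‖w‖ ^ 2) / ‖Complex.exp ((θ : ℂ) * Complex.I) - w‖ ^ 2) * h θ)

/-- The (interior) opening angle of `G` at the boundary point `z₀` equals `a`:
the angular measure of the set of directions in which `G` is seen from `z₀`
at distance `r` tends to `a` as `r → 0⁺`. -/
def HasCornerAngle (G : Set ℂ) (z₀ : ℂ) (a : ℝ) : Prop :=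
  Tendsto (fun r : ℝ =>
      (volume {θ : ℝ | θ ∈ Ico 0 (2 * Real.pi) ∧
        z₀ + (r : ℂ) * Complex.exp ((θ : ℂ) * Complex.I) ∈ G}).toReal)
    (nhdsWithin 0 (Ioi 0)) (nhds a)

/-- The boundary of the Jordan domain `D` is piecewise analytic: it is a union of
finitely many analytic arcs `τ i '' [0,1]` (each `τ i` is conformal, i.e. injective
and holomorphic, on an open neighborhood `U i` of the segment `[0,1]`), consecutive
arcs are joined at the junction points `τ i 1 = τ (i+1) 0`, and at the junction
point `τ i 1` the exterior angle of `G` is `extAngle i · π` (so the interior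
opening angle there is `(2 - extAngle i) · π`). -/
structure PiecewiseAnalyticBoundary (D : JordanDomain) where
  /-- number of analytic arcs -/
  m : ℕ
  m_pos : 0 < m
  /-- conformal parametrizations of the arcs -/
  τ : Fin m → ℂ → ℂ
  /-- neighborhoods of the segment `[0,1]` on which the `τ i` are conformal -/
  U : Fin m → Set ℂ
  U_open : ∀ i, IsOpen (U i)
  seg_sub : ∀ i, (Complex.ofReal '' Icc (0 : ℝ) 1) ⊆ U i
  analytic : ∀ i, DifferentiableOn ℂ (τ i) (U i)
  inj : ∀ i, InjOn (τ i) (U i)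
  cover : (⋃ i, τ i '' (Complex.ofReal '' Icc (0 : ℝ) 1)) = frontier D.G
  junction : ∀ i : Fin m,
    τ i 1 = τ (Fin.mk ((i.val + 1) % m) (Nat.mod_lt _ m_pos)) 0
  /-- `extAngle i · π` is the exterior angle at the junction point `τ i 1` -/
  extAngle : Fin m → ℝ
  extAngle_mem : ∀ i, extAngle i ∈ Ioo (0 : ℝ) 2
  extAngle_spec : ∀ i, HasCornerAngle D.G (τ i 1) ((2 - extAngle i) * Real.pi)

end

/-!
Fix `q` strictly between `1 / p` and both `m - α` and `m + 1`, where `p = 2` in the paper. For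
`s ≥ d` one trades part of the decay of the kernel from `s` to `r`:
`(s + r) ^ (-(m + 1)) ≤ (r + d) ^ (-q) * s ^ (q - m - 1)`. The right-hand side is a product, so
the double integral separates: `q < m - α` makes the `s`-integral converge at infinity,
`1 / p < q` does the same for the `r`-integral, and the resulting powers of `d` multiply to the
one required by homogeneity.
-/

theorem setIntegral_le_setIntegral_of_subset {X : Type*} [MeasurableSpace X] {μ : Measure X}
    {S T : Set X} {f g : X → ℝ} (hS : MeasurableSet S) (hT : MeasurableSet T) (hST : S ⊆ T)
    (hg : IntegrableOn g T μ) (hg₀ : ∀ x ∈ T, 0 ≤ g x) (hf₀ : ∀ x ∈ S, 0 ≤ f x)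
    (hfg : ∀ x ∈ S, f x ≤ g x) : ∫ x in S, f x ∂μ ≤ ∫ x in T, g x ∂μ :=
  calc ∫ x in S, f x ∂μ
      ≤ ∫ x in S, g x ∂μ := integral_mono_of_nonneg (ae_restrict_of_forall_mem hS hf₀)
        (hg.mono_set hST) (ae_restrict_of_forall_mem hS hfg)
    _ ≤ ∫ x in T, g x ∂μ :=
      setIntegral_mono_set hg (ae_restrict_of_forall_mem hT hg₀) hST.eventuallyLE

theorem integral_add_rpow_Ioi_of_lt {a c m : ℝ} (ha : a < -1) (hc : -m < c) :
    ∫ x in Ioi c, (x + m) ^ a = -(c + m) ^ (a + 1) / (a + 1) := by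
  have translate := (measurePreserving_add_right volume m).setIntegral_preimage_emb
    (measurableEmbedding_addRight m) (fun x : ℝ ↦ x ^ a) (Ioi (c + m))
  rw [preimage_add_const_Ioi, add_sub_cancel_right] at translate
  rw [translate, integral_Ioi_rpow_of_lt ha (by linarith)]

theorem rpow_mul_add_rpow_neg_le {α β q d r s : ℝ} (hq : 0 ≤ q) (hqβ : q ≤ β) (hd : 0 < d)
    (hds : d ≤ s) (hr : 0 ≤ r) :
    s ^ α * (s + r) ^ (-β) ≤ (r + d) ^ (-q) * s ^ (α + q - β) := by
  have hs : 0 < s := hd.trans_le hds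
  have decay_r : (s + r) ^ (-q) ≤ (r + d) ^ (-q) :=
    Real.rpow_le_rpow_of_nonpos (by positivity) (by linarith) (by linarith)
  have decay_s : (s + r) ^ (q - β) ≤ s ^ (q - β) :=
    Real.rpow_le_rpow_of_nonpos hs (by linarith) (by linarith)
  calc s ^ α * (s + r) ^ (-β)
      = s ^ α * ((s + r) ^ (-q) * (s + r) ^ (q - β)) := by
        rw [← Real.rpow_add (by positivity)]; ring_nf
    _ ≤ s ^ α * ((r + d) ^ (-q) * s ^ (q - β)) := by gcongr
    _ = (r + d) ^ (-q) * s ^ (α + q - β) := by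
        rw [add_sub_assoc, Real.rpow_add hs]; ring

theorem setIntegral_rpow_mul_add_rpow_nonneg {α β r : ℝ} {S : Set ℝ} (hS : MeasurableSet S)
    (hS₀ : S ⊆ Ioi 0) (hr : 0 ≤ r) : 0 ≤ ∫ s in S, s ^ α * (s + r) ^ β :=
  setIntegral_nonneg hS fun s hs ↦ by
    have : 0 < s := hS₀ hs
    positivity

theorem setIntegral_rpow_mul_add_rpow_le {α m q d r : ℝ} {S : Set ℝ} (hq : 0 ≤ q)
    (hqm : q ≤ m + 1) (hqα : q < m - α) (hd : 0 < d) (hr : 0 ≤ r) (hS : MeasurableSet S)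
    (hSd : S ⊆ Ioi d) :
    ∫ s in S, s ^ α * (s + r) ^ (-(m + 1)) ≤
      d ^ (α - m + q) / (m - α - q) * (r + d) ^ (-q) := by
  have exponent_lt : α + q - (m + 1) < -1 := by linarith
  calc ∫ s in S, s ^ α * (s + r) ^ (-(m + 1))
      ≤ ∫ s in Ioi d, (r + d) ^ (-q) * s ^ (α + q - (m + 1)) := by
        refine setIntegral_le_setIntegral_of_subset hS measurableSet_Ioi hSd
          ((integrableOn_Ioi_rpow_of_lt exponent_lt hd).const_mul _) (fun s hs ↦ ?_)
          (fun s hs ↦ ?_) fun s hs ↦ rpow_mul_add_rpow_neg_le hq hqm hd (hSd hs).le hr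
        · have : 0 < s := hd.trans hs
          positivity
        · have : 0 < s := hd.trans (hSd hs)
          positivity
    _ = d ^ (α - m + q) / (m - α - q) * (r + d) ^ (-q) := by
        rw [integral_const_mul, integral_Ioi_rpow_of_lt exponent_lt hd, mul_comm, neg_div,
          ← div_neg]
        ring_nf

theorem setIntegral_rpow_le_of_le_mul_add_rpow {p q c d K : ℝ} {R : Set ℝ} {f : ℝ → ℝ}
    (hp : 0 ≤ p) (hpq : 1 < p * q) (hc : -d < c) (hK : 0 ≤ K) (hR : MeasurableSet R)
    (hRc : R ⊆ Ioi c) (hf₀ : ∀ r ∈ R, 0 ≤ f r) (hf : ∀ r ∈ R, f r ≤ K * (r + d) ^ (-q)) :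
    ∫ r in R, f r ^ p ≤ K ^ p * ((c + d) ^ (1 - p * q) / (p * q - 1)) := by
  have base_pos (r : ℝ) (hr : r ∈ Ioi c) : 0 < r + d := by linarith [mem_Ioi.mp hr]
  have f_rpow_le (r : ℝ) (hr : r ∈ R) : f r ^ p ≤ K ^ p * (r + d) ^ (-(p * q)) := by
    have := base_pos r (hRc hr)
    calc f r ^ p
        ≤ (K * (r + d) ^ (-q)) ^ p := Real.rpow_le_rpow (hf₀ r hr) (hf r hr) hp
      _ = K ^ p * (r + d) ^ (-(p * q)) := by
          rw [Real.mul_rpow hK (by positivity), ← Real.rpow_mul this.le, neg_mul, mul_comm q]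
  calc ∫ r in R, f r ^ p
      ≤ ∫ r in Ioi c, K ^ p * (r + d) ^ (-(p * q)) := by
        refine setIntegral_le_setIntegral_of_subset hR measurableSet_Ioi hRc
          ((integrableOn_add_rpow_Ioi_of_lt (by linarith) hc).const_mul _)
          (fun r hr ↦ ?_) (fun r hr ↦ Real.rpow_nonneg (hf₀ r hr) p) f_rpow_le
        have := base_pos r hr
        positivity
    _ = K ^ p * ((c + d) ^ (1 - p * q) / (p * q - 1)) := by
        rw [integral_const_mul, integral_add_rpow_Ioi_of_lt (by linarith) hc, neg_div,
          ← div_neg]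
        ring_nf

theorem setIntegral_setIntegral_rpow_mul_add_rpow_rpow_le {p α m q d : ℝ} {R S : Set ℝ}
    (hp : 0 < p) (hpq : 1 < p * q) (hqm : q ≤ m + 1) (hqα : q < m - α) (hd : 0 < d)
    (hR : MeasurableSet R) (hR₀ : R ⊆ Ioi 0) (hS : MeasurableSet S) (hSd : S ⊆ Ioi d) :
    ∫ r in R, (∫ s in S, s ^ α * (s + r) ^ (-(m + 1))) ^ p ≤
      ((m - α - q) ^ p * (p * q - 1))⁻¹ * d ^ (p * (α - m) + 1) := by
  have hq : 0 < q := pos_of_mul_pos_right (one_pos.trans hpq) hp.le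
  have hqα' : 0 < m - α - q := sub_pos.mpr hqα
  calc ∫ r in R, (∫ s in S, s ^ α * (s + r) ^ (-(m + 1))) ^ p
      ≤ (d ^ (α - m + q) / (m - α - q)) ^ p * ((0 + d) ^ (1 - p * q) / (p * q - 1)) :=
        setIntegral_rpow_le_of_le_mul_add_rpow hp.le hpq (neg_neg_of_pos hd) (by positivity)
          hR hR₀
          (fun r hr ↦ setIntegral_rpow_mul_add_rpow_nonneg hS
            (hSd.trans (Ioi_subset_Ioi hd.le)) (hR₀ hr).le)
          fun r hr ↦ setIntegral_rpow_mul_add_rpow_le hq.le hqm hqα hd (hR₀ hr).le hS hSd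
    _ = ((m - α - q) ^ p * (p * q - 1))⁻¹ *
          (d ^ ((α - m + q) * p) * d ^ (1 - p * q)) := by
        rw [Real.div_rpow (by positivity) hqα'.le, ← Real.rpow_mul hd.le, zero_add,
          div_mul_div_comm, div_eq_inv_mul]
    _ = ((m - α - q) ^ p * (p * q - 1))⁻¹ * d ^ (p * (α - m) + 1) := by
        rw [← Real.rpow_add hd]
        ring_nf

theorem dzjadyk_integral_estimate_general {p α m : ℝ} (hp : 0 < p) (hα : α + 1 / p < m)
    (hm : 1 / p < m + 1) :
    ∃ C : ℝ, 0 < C ∧ ∀ d : ℝ, 0 < d → ∀ R S : Set ℝ, MeasurableSet R → R ⊆ Ioi 0 →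
      MeasurableSet S → S ⊆ Ioi d →
      ∫ r in R, (∫ s in S, s ^ α * (s + r) ^ (-(m + 1))) ^ p ≤ C * d ^ (p * (α - m) + 1) := by
  obtain ⟨q, hpq, hq⟩ : ∃ q, 1 / p < q ∧ q < min (m - α) (m + 1) :=
    exists_between (lt_min (by linarith) hm)
  obtain ⟨hqα, hqm⟩ := lt_min_iff.mp hq
  rw [div_lt_iff₀' hp] at hpq
  have C_pos : 0 < ((m - α - q) ^ p * (p * q - 1))⁻¹ :=
    inv_pos.mpr (mul_pos (Real.rpow_pos_of_pos (sub_pos.mpr hqα) p) (sub_pos.mpr hpq))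
  exact ⟨_, C_pos, fun d hd R S hR hR₀ hS hSd ↦
    setIntegral_setIntegral_rpow_mul_add_rpow_rpow_le hp hpq hqm.le hqα hd hR hR₀ hS hSd⟩

/-- estimate for `‖g₂ - P_n‖₂` in the proof of Theorem 1.2.
Let `α > -1/2` and `m > α + 1/2` be reals, and `A, B > 0`. Then there is
`C = C(α,m,A,B) > 0` such that for all `0 < d ≤ min(A,B)`:
`∫₀^A (∫_d^B s^α (s+r)^{-(m+1)} ds)² dr ≤ C·d^{2(α-m)+1}`. -/
theorem dzjadyk_integral_estimate
    (α m A B : ℝ) (hα : -(1 / 2 : ℝ) < α) (hm : α + 1 / 2 < m)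
    (hA : 0 < A) (hB : 0 < B) :
    ∃ C : ℝ, 0 < C ∧ ∀ d : ℝ, 0 < d → d ≤ min A B →
      (∫ r in Ioc (0 : ℝ) A,
        (∫ s in Ioc d B, s ^ α * (s + r) ^ (-(m + 1))) ^ 2) ≤
        C * d ^ (2 * (α - m) + 1) := by
  obtain ⟨C, hC, hle⟩ := dzjadyk_integral_estimate_general two_pos hm (by linarith)
  exact ⟨C, hC, fun d hd _ ↦ mod_cast hle d hd (Ioc 0 A) (Ioc d B) measurableSet_Ioc
    Ioc_subset_Ioi_self measurableSet_Ioc Ioc_subset_Ioi_self⟩
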